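/- arXiv:1408.2265 — 5 statements merged into one kernel-verified Lean document; each statement's English description precedes it below -/
import Mathlib

section
/- Let n ≥ 1 and k ≥ 1, and let i₁,…,i_{2k} be indices in {1,…,n}. Then ⟨ξ_{i₁}⋯ξ_{i_{2k}}⟩ = ((2k)!/((2n)^{k} k!)) · (1/(2k)!) Σ_{σ ∈ S_{2k}} ∏_{m=1}^{k} δ_{i_{σ(2m-1)} i_{σ(2m)}}, where δ is the Kronecker delta and the sum is over all permutations of {1,…,2k}. Moreover ⟨ξ_{i₁}⋯ξ_{i_{2k+1}}⟩ = 0 for any odd number of factors. -/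
open MeasureTheory

/-- The Gaussian average `⟨f⟩ = (n/(2π))^{n/2} ∫_{ℝⁿ} exp(-(n/2)|ξ|²) f(ξ) dξ`. -/
noncomputable def gaussAvg (n : ℕ) (f : (Fin n → ℝ) → ℝ) : ℝ :=
  ((n : ℝ) / (2 * Real.pi)) ^ ((n : ℝ) / 2)
    * ∫ ξ : Fin n → ℝ, Real.exp (-((n : ℝ) / 2) * ∑ j, ξ j ^ 2) * f ξ

/-!
The Gaussian weight is a product over the coordinates, so the average of a monomial is the product
over `b` of the one-dimensional moments of order `c b`, where `c b` is the number of factors `ξ b`.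
It vanishes unless every `c b = 2 * d b` is even, in which case it equals
`∏ b, (2 * d b)! / ((2n)^(d b) * (d b)!)`. On the combinatorial side, a permutation `σ` contributes
to the symmetrized product of deltas iff `i ∘ σ = g ∘ p`, where `p` sends a position to the pair
containing it and `g` labels the pairs. A given `g` arises from `∏ b, (2 * d b)!` permutations if it
takes each value `b` exactly `d b` times and from none otherwise, and there are `k! / ∏ b, (d b)!`
such labellings.
-/

section FiberCard

open Finset

/-- The number of times the value `b` is taken by `f`: the exponent of `ξ b` in the monomial
`∏ a, ξ (f a)`. -/
def fiberCard {α β : Type*} [Fintype α] [DecidableEq β] (f : α → β) (b : β) : ℕ :=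
  Fintype.card {a // f a = b}

variable {α β κ : Type*} [Fintype α] [DecidableEq β]

lemma fiberCard_eq_card_filter (f : α → β) (b : β) : fiberCard f b = #{a | f a = b} :=
  Fintype.card_subtype _

lemma sum_fiberCard [Fintype β] (f : α → β) : ∑ b, fiberCard f b = Fintype.card α := by
  simp only [fiberCard, ← Fintype.card_sigma]
  exact Fintype.card_congr (Equiv.sigmaFiberEquiv f)

lemma prod_comp_eq_prod_pow_fiberCard {M : Type*} [CommMonoid M] [Fintype β]
    (f : α → β) (x : β → M) : ∏ a, x (f a) = ∏ b, x b ^ fiberCard f b := by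
  simp only [← Fintype.prod_fiberwise' f x, prod_const, card_univ, fiberCard]

lemma fiberCard_comp_perm (f : α → β) (σ : Equiv.Perm α) : fiberCard (f ∘ σ) = fiberCard f :=
  funext fun _ => Fintype.card_congr (σ.subtypeEquiv fun _ => Iff.rfl)

lemma fiberCard_comp [Fintype κ] [DecidableEq κ] {p : α → κ} {r : ℕ}
    (hp : ∀ c, fiberCard p c = r) (g : κ → β) : fiberCard (g ∘ p) = r • fiberCard g := by
  funext b
  calc fiberCard (g ∘ p) b = ∑ a, if g (p a) = b then 1 else 0 := by
        rw [fiberCard_eq_card_filter, card_filter]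
        rfl
    _ = ∑ c, fiberCard p c * if g c = b then 1 else 0 := by
        simp only [← Fintype.sum_fiberwise' p fun c => if g c = b then 1 else 0, sum_const,
          card_univ, smul_eq_mul, fiberCard]
    _ = r * fiberCard g b := by
        simp only [hp, ← mul_sum, fiberCard_eq_card_filter, card_filter]

lemma exists_perm_comp_eq {f g : α → β} (h : fiberCard f = fiberCard g) :
    ∃ σ : Equiv.Perm α, f ∘ σ = g := by
  have fiberEquiv (b : β) : {a // g a = b} ≃ {a // f a = b} :=
    Fintype.equivOfCardEq (congrFun h b).symm
  refine ⟨(Equiv.sigmaFiberEquiv g).symm.trans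
    ((Equiv.sigmaCongrRight fiberEquiv).trans (Equiv.sigmaFiberEquiv f)), ?_⟩
  funext a
  exact (fiberEquiv (g a) ⟨a, rfl⟩).2

lemma exists_fiberCard_eq [Fintype β] {d : β → ℕ} (h : ∑ b, d b = Fintype.card α) :
    ∃ f : α → β, fiberCard f = d := by
  have e : α ≃ Σ b, Fin (d b) := Fintype.equivOfCardEq (by simp [h])
  refine ⟨fun a => (e a).1, funext fun b => ?_⟩
  have fiberEquiv : {a // (e a).1 = b} ≃ Fin (d b) :=
    (e.subtypeEquiv fun _ => Iff.rfl).trans (Equiv.sigmaSubtype b)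
  exact (Fintype.card_congr fiberEquiv).trans (Fintype.card_fin _)

variable [Fintype β] [Fintype κ] [DecidableEq κ] {p : α → κ} {r : ℕ}

lemma sum_eq_card_of_fiberCard_eq_smul (hr : r ≠ 0) (hp : ∀ c, fiberCard p c = r)
    {f : α → β} {d : β → ℕ} (hf : fiberCard f = r • d) : ∑ b, d b = Fintype.card κ := by
  refine Nat.eq_of_mul_eq_mul_left (Nat.pos_of_ne_zero hr) ?_
  calc r * ∑ b, d b = Fintype.card α := by
        simp only [← sum_fiberCard f, hf, Pi.smul_apply, smul_eq_mul, mul_sum]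
    _ = r * Fintype.card κ := by
        simp only [← sum_fiberCard p, hp, sum_const, card_univ, smul_eq_mul, mul_comm]

variable [DecidableEq α]

lemma card_perm_comp_eq (f g : α → β) :
    #{σ : Equiv.Perm α | f ∘ σ = g} =
      if fiberCard f = fiberCard g then ∏ b, (fiberCard f b).factorial else 0 := by
  split_ifs with h
  · obtain ⟨τ, rfl⟩ := exists_perm_comp_eq h
    have card_stabilizer : #{σ : Equiv.Perm α | f ∘ σ = f} = ∏ b, (fiberCard f b).factorial := by
      rw [← Fintype.card_subtype, DomMulAct.stabilizer_card]
      rfl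
    rw [← card_stabilizer]
    refine card_equiv (Equiv.mulRight τ⁻¹) fun σ => ?_
    simp only [mem_filter_univ, Equiv.coe_mulRight, Equiv.Perm.coe_mul, ← Function.comp_assoc]
    exact (Equiv.comp_symm_eq τ f (f ∘ σ)).symm
  · refine card_eq_zero.2 (filter_eq_empty_iff.2 fun σ _ hσ => h ?_)
    rw [← hσ, fiberCard_comp_perm]

lemma card_fiberCard_eq_mul_prod_factorial {d : β → ℕ} (h : ∑ b, d b = Fintype.card α) :
    #{f : α → β | fiberCard f = d} * ∏ b, (d b).factorial = (Fintype.card α).factorial := by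
  obtain ⟨f, rfl⟩ := exists_fiberCard_eq h
  calc _ = ∑ g : α → β, #{σ : Equiv.Perm α | f ∘ σ = g} := by
        simp only [card_perm_comp_eq, ← sum_filter, sum_const, smul_eq_mul,
          eq_comm (a := fiberCard f)]
    _ = (Fintype.card α).factorial := by
        rw [← card_eq_sum_card_fiberwise (by simp), card_univ, Fintype.card_perm]

lemma card_perm_exists_comp_eq_comp (hp : Function.Surjective p) (f : α → β) :
    #{σ : Equiv.Perm α | ∃ g : κ → β, f ∘ σ = g ∘ p} =
      ∑ g : κ → β, #{σ : Equiv.Perm α | f ∘ σ = g ∘ p} := by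
  rw [← card_biUnion]
  · congr 1
    ext σ
    simp
  · intro g _ g' _ hne
    refine disjoint_filter.2 fun σ _ hg hg' => hne ?_
    exact hp.injective_comp_right (hg.symm.trans hg')

lemma card_perm_exists_comp_eq_comp_mul_prod_factorial (hr : r ≠ 0)
    (hp : ∀ c, fiberCard p c = r) {f : α → β} {d : β → ℕ} (hf : fiberCard f = r • d) :
    #{σ : Equiv.Perm α | ∃ g : κ → β, f ∘ σ = g ∘ p} * ∏ b, (d b).factorial =
      (Fintype.card κ).factorial * ∏ b, (r * d b).factorial := by
  have surjective_p : Function.Surjective p := fun c => by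
    have fiber_nonempty : 0 < fiberCard p c := (hp c).symm ▸ Nat.pos_of_ne_zero hr
    obtain ⟨a, ha⟩ := Fintype.card_pos_iff.1 fiber_nonempty
    exact ⟨a, ha⟩
  have card_perm_of_label (g : κ → β) : #{σ : Equiv.Perm α | f ∘ σ = g ∘ p} =
      if fiberCard g = d then ∏ b, (r * d b).factorial else 0 := by
    simp only [card_perm_comp_eq, fiberCard_comp hp, hf, smul_right_inj hr, eq_comm (a := d),
      Pi.smul_apply, smul_eq_mul]
  rw [card_perm_exists_comp_eq_comp surjective_p, sum_congr rfl fun g _ => card_perm_of_label g,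
    ← sum_filter, sum_const, smul_eq_mul,
    ← card_fiberCard_eq_mul_prod_factorial (sum_eq_card_of_fiberCard_eq_smul hr hp hf)]
  ring

end FiberCard

section PairIndex

variable {k : ℕ}

/-- The pair containing a given position, where `0, …, 2k - 1` are split into the `k` pairs
`{2 * j, 2 * j + 1}` matched up by the Kronecker deltas. -/
def pairIndex (k : ℕ) (m : Fin (2 * k)) : Fin k := ⟨m / 2, by omega⟩

lemma pairIndex_eq_iff {m : Fin (2 * k)} {j : Fin k} :
    pairIndex k m = j ↔ m = ⟨2 * j, by omega⟩ ∨ m = ⟨2 * j + 1, by omega⟩ := by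
  simp only [pairIndex, Fin.ext_iff]
  omega

lemma fiberCard_pairIndex (j : Fin k) : fiberCard (pairIndex k) j = 2 := by
  have fiber_eq : ({m | pairIndex k m = j} : Finset (Fin (2 * k))) =
      {⟨2 * j, by omega⟩, ⟨2 * j + 1, by omega⟩} := by
    ext m
    simp [pairIndex_eq_iff]
  rw [fiberCard_eq_card_filter, fiber_eq, Finset.card_pair (by simp)]

lemma exists_eq_comp_pairIndex_iff {β : Type*} (f : Fin (2 * k) → β) :
    (∃ g : Fin k → β, f = g ∘ pairIndex k) ↔
      ∀ j : Fin k, f ⟨2 * j, by omega⟩ = f ⟨2 * j + 1, by omega⟩ := by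
  constructor
  · rintro ⟨g, rfl⟩ j
    simp only [Function.comp_apply, pairIndex_eq_iff.2 (Or.inl rfl),
      pairIndex_eq_iff.2 (Or.inr rfl)]
  · intro h
    refine ⟨fun j => f ⟨2 * j, by omega⟩, funext fun m => ?_⟩
    rcases pairIndex_eq_iff.1 (rfl : pairIndex k m = pairIndex k m) with left | right
    · exact congrArg f left
    · exact (congrArg f right).trans (h _).symm

lemma sum_perm_prod_pairs {R β : Type*} [CommSemiring R] [Fintype β] [DecidableEq β]
    (f : Fin (2 * k) → β) :
    ∑ σ : Equiv.Perm (Fin (2 * k)), ∏ j : Fin k,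
        (if f (σ ⟨2 * j, by omega⟩) = f (σ ⟨2 * j + 1, by omega⟩) then (1 : R) else 0) =
      Finset.card {σ : Equiv.Perm (Fin (2 * k)) | ∃ g : Fin k → β, f ∘ σ = g ∘ pairIndex k} := by
  rw [Finset.natCast_card_filter]
  refine Finset.sum_congr rfl fun σ _ => ?_
  rw [Fintype.prod_boole]
  congr 1
  exact propext (exists_eq_comp_pairIndex_iff (f ∘ σ)).symm

end PairIndex

section GaussMoment

open Real

/-- For `0 < a`, the moment of order `c` of the centred Gaussian distribution on `ℝ` with variance
`1 / a`. Its formula for `a = n` is the one-coordinate factor of `gaussAvg n`. -/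
noncomputable def gaussMoment (a : ℝ) (c : ℕ) : ℝ :=
  (a / (2 * π)) ^ (1 / 2 : ℝ) * ∫ x : ℝ, exp (-(a / 2) * x ^ 2) * x ^ c

lemma integral_exp_neg_mul_sq_mul_pow_of_odd (b : ℝ) {c : ℕ} (hc : Odd c) :
    ∫ x : ℝ, exp (-b * x ^ 2) * x ^ c = 0 := by
  have reflect := integral_neg_eq_self (fun x : ℝ => exp (-b * x ^ 2) * x ^ c) volume
  simp only [hc.neg_pow, neg_sq, mul_neg, integral_neg] at reflect
  linarith

lemma gamma_nat_add_half_eq_factorial (d : ℕ) :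
    Gamma (d + 1 / 2) = (2 * d).factorial / (4 ^ d * d.factorial) * √π := by
  induction d with
  | zero => simp [Gamma_one_half_eq, -one_div]
  | succ d ih =>
    have shift : ((d + 1 : ℕ) : ℝ) + 1 / 2 = (d + 1 / 2) + 1 := by push_cast; ring
    rw [shift, Gamma_add_one (by positivity), ih, mul_add_one, Nat.factorial_succ,
      Nat.factorial_succ, Nat.factorial_succ]
    push_cast
    field_simp
    ring

lemma integral_exp_neg_mul_sq_mul_pow_two_mul {b : ℝ} (hb : 0 < b) (d : ℕ) :
    ∫ x : ℝ, exp (-b * x ^ 2) * x ^ (2 * d) =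
      (2 * d).factorial / ((4 * b) ^ d * d.factorial) * √(π / b) := by
  have half_line : ∫ x in Set.Ioi (0 : ℝ), exp (-b * x ^ 2) * x ^ (2 * d) =
      b ^ (-(d + 1 / 2 : ℝ)) * (1 / 2) * Gamma (d + 1 / 2) := by
    have gamma_integral := integral_rpow_mul_exp_neg_mul_rpow (p := 2) (q := (2 * d : ℕ)) two_pos
      (by linarith [Nat.cast_nonneg (α := ℝ) (2 * d)]) hb
    simp only [rpow_natCast, rpow_two, mul_comm (_ ^ (2 * d))] at gamma_integral
    rw [gamma_integral]
    push_cast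
    ring_nf
  have even_integrand := integral_comp_abs (f := fun x : ℝ => exp (-b * x ^ 2) * x ^ (2 * d))
  simp only [sq_abs, (even_two_mul d).pow_abs] at even_integrand
  rw [even_integrand, half_line, gamma_nat_add_half_eq_factorial, rpow_neg hb.le,
    rpow_add hb, rpow_natCast, ← sqrt_eq_rpow, sqrt_div' _ hb.le, mul_pow]
  field_simp

lemma gaussMoment_of_odd (a : ℝ) {c : ℕ} (hc : Odd c) : gaussMoment a c = 0 := by
  rw [gaussMoment, integral_exp_neg_mul_sq_mul_pow_of_odd _ hc, mul_zero]

lemma gaussMoment_two_mul {a : ℝ} (ha : 0 < a) (d : ℕ) :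
    gaussMoment a (2 * d) = (2 * d).factorial / ((2 * a) ^ d * d.factorial) := by
  have normalization : √(a / (2 * π)) * √(π / (a / 2)) = 1 := by
    rw [← sqrt_mul (by positivity), sqrt_eq_one]
    field_simp
  rw [gaussMoment, ← sqrt_eq_rpow, integral_exp_neg_mul_sq_mul_pow_two_mul (half_pos ha),
    mul_left_comm, normalization, mul_one]
  ring_nf

end GaussMoment

section GaussAvg

open Finset

variable {α κ : Type*} [Fintype α] {n : ℕ}

lemma gaussAvg_prod_eq_prod_gaussMoment (i : α → Fin n) :
    gaussAvg n (fun ξ => ∏ a, ξ (i a)) = ∏ b, gaussMoment n (fiberCard i b) := by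
  have normalization : ((n : ℝ) / (2 * Real.pi)) ^ ((n : ℝ) / 2) =
      ∏ _b : Fin n, ((n : ℝ) / (2 * Real.pi)) ^ (1 / 2 : ℝ) := by
    rw [prod_const, card_univ, Fintype.card_fin, ← Real.rpow_mul_natCast (by positivity)]
    ring_nf
  have integrand (ξ : Fin n → ℝ) : Real.exp (-((n : ℝ) / 2) * ∑ j, ξ j ^ 2) * ∏ a, ξ (i a) =
      ∏ b, Real.exp (-((n : ℝ) / 2) * ξ b ^ 2) * ξ b ^ fiberCard i b := by
    rw [prod_comp_eq_prod_pow_fiberCard, mul_sum, Real.exp_sum, prod_mul_distrib]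
  simp only [gaussAvg, integrand]
  rw [normalization, integral_fintype_prod_volume_eq_prod
    (fun b (x : ℝ) => Real.exp (-((n : ℝ) / 2) * x ^ 2) * x ^ fiberCard i b), ← prod_mul_distrib]
  rfl

lemma gaussAvg_prod_eq_zero_of_odd_fiberCard {i : α → Fin n} {b : Fin n}
    (hb : Odd (fiberCard i b)) : gaussAvg n (fun ξ => ∏ a, ξ (i a)) = 0 := by
  rw [gaussAvg_prod_eq_prod_gaussMoment]
  exact prod_eq_zero (mem_univ b) (gaussMoment_of_odd _ hb)

lemma gaussAvg_prod_eq_zero_of_odd_card (h : Odd (Fintype.card α)) (i : α → Fin n) :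
    gaussAvg n (fun ξ => ∏ a, ξ (i a)) = 0 := by
  rw [← sum_fiberCard i] at h
  obtain ⟨b, hb⟩ : ∃ b, Odd (fiberCard i b) := by
    by_contra! all_even
    simp only [Nat.not_odd_iff_even] at all_even
    exact Nat.not_odd_iff_even.2 (even_sum _ fun b _ => all_even b) h
  exact gaussAvg_prod_eq_zero_of_odd_fiberCard hb

lemma gaussAvg_prod_of_fiberCard_eq_two_smul {i : α → Fin n} {d : Fin n → ℕ}
    (hd : fiberCard i = 2 • d) :
    gaussAvg n (fun ξ => ∏ a, ξ (i a)) =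
      (∏ b, ((2 * d b).factorial : ℝ)) /
        ((2 * n : ℝ) ^ (∑ b, d b) * ∏ b, ((d b).factorial : ℝ)) := by
  rw [gaussAvg_prod_eq_prod_gaussMoment, ← prod_pow_eq_pow_sum, ← prod_mul_distrib,
    ← prod_div_distrib]
  refine prod_congr rfl fun b _ => ?_
  rw [hd]
  exact gaussMoment_two_mul (Nat.cast_pos.2 b.pos) (d b)

theorem gaussAvg_prod_eq_card_perm_div [DecidableEq α] [Fintype κ] [DecidableEq κ] {p : α → κ}
    (hp : ∀ c, fiberCard p c = 2) (i : α → Fin n) :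
    gaussAvg n (fun ξ => ∏ a, ξ (i a)) =
      #{σ : Equiv.Perm α | ∃ g : κ → Fin n, i ∘ σ = g ∘ p} /
        ((2 * n : ℝ) ^ Fintype.card κ * (Fintype.card κ).factorial) := by
  by_cases all_even : ∀ b, Even (fiberCard i b)
  · obtain ⟨d, hd⟩ : ∃ d : Fin n → ℕ, fiberCard i = 2 • d := by
      choose d hd using fun b => (all_even b).two_dvd
      exact ⟨d, funext hd⟩
    have count : (∏ b, ((2 * d b).factorial : ℝ)) / ∏ b, ((d b).factorial : ℝ) =
        #{σ : Equiv.Perm α | ∃ g : κ → Fin n, i ∘ σ = g ∘ p} / (Fintype.card κ).factorial := by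
      rw [div_eq_div_iff (by positivity) (by positivity), mul_comm]
      exact_mod_cast (card_perm_exists_comp_eq_comp_mul_prod_factorial two_ne_zero hp hd).symm
    rw [gaussAvg_prod_of_fiberCard_eq_two_smul hd,
      sum_eq_card_of_fiberCard_eq_smul two_ne_zero hp hd, div_mul_eq_div_div_swap, count,
      ← div_mul_eq_div_div_swap]
  · obtain ⟨b, hb⟩ := not_forall.1 all_even
    have no_perm : ∀ σ : Equiv.Perm α, ¬∃ g : κ → Fin n, i ∘ σ = g ∘ p := by
      rintro σ ⟨g, hg⟩
      refine hb ?_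
      rw [← fiberCard_comp_perm i σ, hg, fiberCard_comp hp]
      exact even_two_mul _
    rw [gaussAvg_prod_eq_zero_of_odd_fiberCard (Nat.not_even_iff_odd.1 hb),
      filter_eq_empty_iff.2 fun σ _ => no_perm σ, card_empty, Nat.cast_zero, zero_div]

end GaussAvg

/-- **Gaussian averages of monomials.**
`⟨ξ_{i₁}⋯ξ_{i_{2k}}⟩ = ((2k)!/((2n)^k k!)) δ^{(i₁i₂}⋯δ^{i_{2k-1}i_{2k})}`, with the
complete symmetrization realized as a sum over all permutations of `{1,…,2k}`,
and every odd moment `⟨ξ_{i₁}⋯ξ_{i_{2k+1}}⟩` vanishes. -/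
theorem gaussAvg_monomials
    (n : ℕ) (hn : 1 ≤ n) (k : ℕ) (hk : 1 ≤ k) (i : Fin (2 * k) → Fin n) :
    gaussAvg n (fun ξ => ∏ m : Fin (2 * k), ξ (i m))
      = ((Nat.factorial (2 * k) : ℝ) / ((2 * (n : ℝ)) ^ k * (Nat.factorial k : ℝ)))
          * ((1 / (Nat.factorial (2 * k) : ℝ))
              * ∑ σ : Equiv.Perm (Fin (2 * k)), ∏ m : Fin k,
                  (if i (σ ⟨2 * m.val, by have := m.isLt; omega⟩)
                      = i (σ ⟨2 * m.val + 1, by have := m.isLt; omega⟩)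
                   then (1 : ℝ) else 0))
    ∧ ∀ (l : ℕ) (j : Fin (2 * l + 1) → Fin n),
        gaussAvg n (fun ξ => ∏ m : Fin (2 * l + 1), ξ (j m)) = 0 := by
  constructor
  · rw [gaussAvg_prod_eq_card_perm_div fiberCard_pairIndex, sum_perm_prod_pairs, Fintype.card_fin]
    field_simp
  · exact fun l j => gaussAvg_prod_eq_zero_of_odd_card (by simp) j
end

section
/- Let n ≥ 1 and let U : ℝⁿ × ℝⁿ → ℝ be a smooth (C^∞) function. Define the n×n matrix P(x,y) by P_{μν}(x,y) = ∂²U/∂x_μ∂y_ν(x,y), and define G^{νμ}(x,y) = (1/(n-1)!) Σ_{σ,τ} sign(σ) sign(τ) (∏_{k=2}^{n} P_{σ(k)τ(k)}(x,y)) · U(x,y), where the sum runs over all pairs of permutations σ, τ of {1,…,n} with σ(1) = μ and τ(1) = ν. Then for all (x,y): det(P(x,y)) = (1/n) Σ_{μ,ν=1}^{n} ∂²/∂x_μ∂y_ν G^{νμ}(x,y). -/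
open Matrix

/-- Partial derivative of a two-point function with respect to the `μ`-th
coordinate of its first argument. -/
noncomputable def pderivX (n : ℕ) (f : (Fin n → ℝ) × (Fin n → ℝ) → ℝ) (μ : Fin n) :
    (Fin n → ℝ) × (Fin n → ℝ) → ℝ :=
  fun p => fderiv ℝ f p (Pi.single μ 1, 0)

/-- Partial derivative of a two-point function with respect to the `ν`-th
coordinate of its second argument. -/
noncomputable def pderivY (n : ℕ) (f : (Fin n → ℝ) × (Fin n → ℝ) → ℝ) (ν : Fin n) :
    (Fin n → ℝ) × (Fin n → ℝ) → ℝ :=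
  fun p => fderiv ℝ f p (0, Pi.single ν 1)

/-!
Write `D` for a directional derivative and `P μ ν = D (v μ) (D (w ν) U)`. Differentiating
`(∏ k ≠ z, P (σ k) (τ k)) * U` along `w (τ z)` and summing over `τ` with signs, the terms in which
the derivative hits a factor `P (σ k) (τ k)` are symmetric under exchanging `τ z` and `τ k`, because
partial derivatives commute; they cancel in the alternating sum and only `D (w (τ z)) U` survives.
The derivative along `v (σ z)` then acts on `(∏ k ≠ z, P (σ k) (τ k)) * D (w (τ z)) U`, and the same
cancellation in `σ` leaves the alternating double sum of `∏ k, P (σ k) (τ k)`, which is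
`n! * det P`.
-/

open Equiv Finset

section AlternatingSums

variable {ι R : Type*} [Fintype ι] [DecidableEq ι] [CommRing R]

lemma sum_sign_mul_prod_erase_erase_mul_eq_zero {z k : ι} (hzk : z ≠ k) (F S : ι → ι → R)
    (hS : ∀ i j, S i j = S j i) :
    ∑ σ : Perm ι, ((Perm.sign σ : ℤ) : R) *
      ((∏ j ∈ (univ.erase z).erase k, F j (σ j)) * S (σ z) (σ k)) = 0 := by
  refine sum_involution (fun σ _ ↦ σ * swap z k) (fun σ _ ↦ ?_) (fun σ _ _ hσ ↦ ?_)
    (fun _ _ ↦ mem_univ _) (fun σ _ ↦ by simp [mul_assoc])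
  · have sign_neg : ((Perm.sign (σ * swap z k) : ℤ) : R) = -((Perm.sign σ : ℤ) : R) := by
      simp [Perm.sign_swap hzk]
    have prod_eq : ∏ j ∈ (univ.erase z).erase k, F j ((σ * swap z k) j)
        = ∏ j ∈ (univ.erase z).erase k, F j (σ j) := by
      refine prod_congr rfl fun j hj ↦ ?_
      simp only [mem_erase] at hj
      rw [Perm.mul_apply, swap_apply_of_ne_of_ne hj.2.1 hj.1]
    rw [sign_neg, prod_eq, Perm.mul_apply, Perm.mul_apply, swap_apply_left, swap_apply_right,
      hS (σ k) (σ z)]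
    ring
  · exact hzk (swap_eq_one_iff.mp (mul_eq_left.mp hσ))

lemma sum_sign_mul_sum_sign_mul_prod_eq_factorial_mul_det (M : Matrix ι ι R) :
    ∑ τ : Perm ι, ((Perm.sign τ : ℤ) : R) *
      ∑ σ : Perm ι, ((Perm.sign σ : ℤ) : R) * ∏ k, M (σ k) (τ k)
      = ((Fintype.card ι).factorial : R) * M.det := by
  have summand_eq_det (τ : Perm ι) : ((Perm.sign τ : ℤ) : R) *
      ∑ σ : Perm ι, ((Perm.sign σ : ℤ) : R) * ∏ k, M (σ k) (τ k) = M.det := by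
    have sign_mul_self : ((Perm.sign τ : ℤ) : R) * ((Perm.sign τ : ℤ) : R) = 1 := by
      norm_cast
      simp
    calc _ = ((Perm.sign τ : ℤ) : R) * (M.submatrix id τ).det := by
          simp only [det_apply', submatrix_apply, id_eq]
      _ = M.det := by rw [det_permute', ← mul_assoc, sign_mul_self, one_mul]
  simp only [summand_eq_det, sum_const, card_univ, Fintype.card_perm, nsmul_eq_mul]

end AlternatingSums

section DirectionalDerivative

variable {𝕜 E : Type*} [NontriviallyNormedField 𝕜] [NormedAddCommGroup E] [NormedSpace 𝕜 E]

/-- The directional derivative `∂_v f`, as an operator on functions so that it can be iterated. It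
is the value of the Fréchet derivative at `v`, hence `0` at points where `f` is not
differentiable. -/
noncomputable def dirDeriv (v : E) (f : E → 𝕜) : E → 𝕜 := fun p ↦ fderiv 𝕜 f p v

lemma contDiff_dirDeriv {f : E → 𝕜} {m n : WithTop ℕ∞} (hf : ContDiff 𝕜 n f) (hmn : m + 1 ≤ n)
    (v : E) : ContDiff 𝕜 m (dirDeriv v f) :=
  (hf.fderiv_right hmn).clm_apply contDiff_const

lemma dirDeriv_sum_const_mul {α : Type*} {s : Finset α} {f : α → E → 𝕜}
    (hf : ∀ a ∈ s, Differentiable 𝕜 (f a)) (c : α → 𝕜) (v : E) :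
    dirDeriv v (fun q ↦ ∑ a ∈ s, c a * f a q) = fun q ↦ ∑ a ∈ s, c a * dirDeriv v (f a) q := by
  funext p
  have fderiv_const_mul_eq : ∀ a ∈ s,
      fderiv 𝕜 (fun q ↦ c a * f a q) p v = c a * fderiv 𝕜 (f a) p v := fun a ha ↦ by
    rw [fderiv_const_mul (hf a ha p)]
    rfl
  simp only [dirDeriv]
  rw [fderiv_fun_sum fun a ha ↦ (hf a ha p).const_mul (c a), _root_.sum_apply]
  exact sum_congr rfl fderiv_const_mul_eq

lemma dirDeriv_prod_mul {ι : Type*} [DecidableEq ι] {s : Finset ι} {f : ι → E → 𝕜} {g : E → 𝕜}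
    {p : E} (hf : ∀ k ∈ s, DifferentiableAt 𝕜 (f k) p) (hg : DifferentiableAt 𝕜 g p) (v : E) :
    dirDeriv v (fun q ↦ (∏ k ∈ s, f k q) * g q) p
      = (∏ k ∈ s, f k p) * dirDeriv v g p
        + g p * ∑ k ∈ s, (∏ j ∈ s.erase k, f j p) * dirDeriv v (f k) p := by
  have hprod := HasFDerivAt.finsetProd fun k hk ↦ (hf k hk).hasFDerivAt
  simp only [dirDeriv]
  rw [fderiv_fun_mul hprod.differentiableAt hg, hprod.fderiv]
  simp

lemma sum_sign_mul_dirDeriv_prod_erase_mul {ι : Type*} [Fintype ι] [DecidableEq ι] (z : ι)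
    (e : ι → E) {F : ι → ι → E → 𝕜} {g : E → 𝕜} {p : E}
    (hF : ∀ k i, DifferentiableAt 𝕜 (F k i) p) (hg : DifferentiableAt 𝕜 g p)
    (hsymm : ∀ k i j, dirDeriv (e i) (F k j) p = dirDeriv (e j) (F k i) p) :
    ∑ σ : Perm ι, ((Perm.sign σ : ℤ) : 𝕜) *
        dirDeriv (e (σ z)) (fun q ↦ (∏ k ∈ univ.erase z, F k (σ k) q) * g q) p
      = ∑ σ : Perm ι, ((Perm.sign σ : ℤ) : 𝕜) *
        ((∏ k ∈ univ.erase z, F k (σ k) p) * dirDeriv (e (σ z)) g p) := by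
  have factor_terms_cancel : ∑ σ : Perm ι, ((Perm.sign σ : ℤ) : 𝕜) *
      ∑ k ∈ univ.erase z, (∏ j ∈ (univ.erase z).erase k, F j (σ j) p) *
        dirDeriv (e (σ z)) (F k (σ k)) p = 0 := by
    simp only [mul_sum]
    rw [sum_comm]
    exact sum_eq_zero fun k hk ↦ sum_sign_mul_prod_erase_erase_mul_eq_zero
      (ne_of_mem_erase hk).symm (fun j i ↦ F j i p) (fun i j ↦ dirDeriv (e i) (F k j) p) (hsymm k)
  simp only [dirDeriv_prod_mul (fun k _ ↦ hF k _) hg, mul_add, sum_add_distrib, add_eq_left,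
    mul_left_comm _ (g p), ← mul_sum, factor_terms_cancel, mul_zero]

end DirectionalDerivative

section DetPotential

variable {𝕜 E ι : Type*} [NontriviallyNormedField 𝕜] [NormedAddCommGroup E] [NormedSpace 𝕜 E]

/-- The matrix `P_{μν} = ∂_{v_μ} ∂_{w_ν} U` of mixed second derivatives along two families of
directions, which take the place of the coordinate directions of the two arguments of `U`. -/
noncomputable def mixedDeriv (v w : ι → E) (U : E → 𝕜) (μ ν : ι) : E → 𝕜 :=
  dirDeriv (v μ) (dirDeriv (w ν) U)

variable {v w : ι → E} {U : E → 𝕜}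

lemma contDiff_mixedDeriv {m n : WithTop ℕ∞} (hU : ContDiff 𝕜 n U) (hmn : m + 2 ≤ n) (μ ν : ι) :
    ContDiff 𝕜 m (mixedDeriv v w U μ ν) := by
  rw [← one_add_one_eq_two, ← add_assoc] at hmn
  exact contDiff_dirDeriv (contDiff_dirDeriv hU hmn _) le_rfl _

variable [Fintype ι] [DecidableEq ι]

/-- The product `∏_{k ≠ z} P_{σ(k)τ(k)}` of entries of the matrix of mixed derivatives, the summand
of a cofactor of that matrix. -/
noncomputable def mixedDerivProd (z : ι) (v w : ι → E) (U : E → 𝕜) (σ τ : Perm ι) : E → 𝕜 :=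
  fun q ↦ ∏ k ∈ univ.erase z, mixedDeriv v w U (σ k) (τ k) q

/-- The potential `G^{νμ}` whose double divergence is the determinant of the matrix of mixed
derivatives. The index `z` plays the role of the first index `1`. -/
noncomputable def detPotential (z : ι) (v w : ι → E) (U : E → 𝕜) (μ ν : ι) : E → 𝕜 :=
  fun q ↦ (1 / ((Fintype.card ι - 1).factorial : 𝕜)) * ∑ σ : Perm ι, ∑ τ : Perm ι,
    (if σ z = μ ∧ τ z = ν then
      ((Perm.sign σ : ℤ) : 𝕜) * ((Perm.sign τ : ℤ) : 𝕜) * mixedDerivProd z v w U σ τ q * U q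
     else 0)

lemma contDiff_mixedDerivProd {m n : WithTop ℕ∞} (hU : ContDiff 𝕜 n U) (hmn : m + 2 ≤ n) (z : ι)
    (σ τ : Perm ι) : ContDiff 𝕜 m (mixedDerivProd z v w U σ τ) :=
  contDiff_prod fun _ _ ↦ contDiff_mixedDeriv hU hmn _ _

lemma contDiff_mixedDerivProd_mul {m n : WithTop ℕ∞} (hU : ContDiff 𝕜 n U) (hmn : m + 2 ≤ n)
    (z : ι) (σ τ : Perm ι) : ContDiff 𝕜 m (fun q ↦ mixedDerivProd z v w U σ τ q * U q) :=
  (contDiff_mixedDerivProd hU hmn z σ τ).mul (hU.of_le (le_self_add.trans hmn))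

lemma dirDeriv_dirDeriv_detPotential (hU : ContDiff 𝕜 4 U) (z μ ν : ι) (p : E) :
    dirDeriv (v μ) (dirDeriv (w ν) (detPotential z v w U μ ν)) p
      = (1 / ((Fintype.card ι - 1).factorial : 𝕜)) * ∑ σ : Perm ι, ∑ τ : Perm ι,
        (if σ z = μ ∧ τ z = ν then ((Perm.sign σ : ℤ) : 𝕜) * ((Perm.sign τ : ℤ) : 𝕜) *
          dirDeriv (v (σ z)) (dirDeriv (w (τ z)) fun q ↦ mixedDerivProd z v w U σ τ q * U q) p
         else 0) := by
  let coeff (x : Perm ι × Perm ι) : 𝕜 := (1 / ((Fintype.card ι - 1).factorial : 𝕜)) *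
    (if x.1 z = μ ∧ x.2 z = ν then ((Perm.sign x.1 : ℤ) : 𝕜) * ((Perm.sign x.2 : ℤ) : 𝕜) else 0)
  have detPotential_eq_sum : detPotential z v w U μ ν
      = fun q ↦ ∑ x, coeff x * (mixedDerivProd z v w U x.1 x.2 q * U q) := by
    funext q
    simp only [detPotential, coeff, Fintype.sum_prod_type, mul_sum, mul_assoc, ite_mul, zero_mul]
  have term_contDiff (x : Perm ι × Perm ι) :
      ContDiff 𝕜 2 fun q ↦ mixedDerivProd z v w U x.1 x.2 q * U q :=
    contDiff_mixedDerivProd_mul hU (by norm_num) z x.1 x.2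
  rw [detPotential_eq_sum,
    dirDeriv_sum_const_mul fun x _ ↦ (term_contDiff x).differentiable two_ne_zero,
    dirDeriv_sum_const_mul fun x _ ↦
      (contDiff_dirDeriv (m := 1) (term_contDiff x) (by norm_num) _).differentiable one_ne_zero]
  simp only [coeff, Fintype.sum_prod_type, mul_sum, mul_assoc, ite_mul, zero_mul]
  refine sum_congr rfl fun σ _ ↦ sum_congr rfl fun τ _ ↦ ?_
  split_ifs with h
  · rw [h.1, h.2]
  · rfl

lemma sum_sum_dirDeriv_dirDeriv_detPotential (hU : ContDiff 𝕜 4 U) (z : ι) (p : E) :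
    ∑ μ, ∑ ν, dirDeriv (v μ) (dirDeriv (w ν) (detPotential z v w U μ ν)) p
      = (1 / ((Fintype.card ι - 1).factorial : 𝕜)) * ∑ σ : Perm ι,
        ((Perm.sign σ : ℤ) : 𝕜) * ∑ τ : Perm ι, ((Perm.sign τ : ℤ) : 𝕜) *
          dirDeriv (v (σ z)) (dirDeriv (w (τ z)) fun q ↦ mixedDerivProd z v w U σ τ q * U q) p := by
  have sum_sum_ite (a : Perm ι → Perm ι → 𝕜) :
      ∑ μ, ∑ ν, ∑ σ : Perm ι, ∑ τ : Perm ι, (if σ z = μ ∧ τ z = ν then a σ τ else 0)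
        = ∑ σ : Perm ι, ∑ τ : Perm ι, a σ τ := by
    calc _ = ∑ x : ι × ι, ∑ y : Perm ι × Perm ι,
            (if y.1 z = x.1 ∧ y.2 z = x.2 then a y.1 y.2 else 0) := by
          simp only [Fintype.sum_prod_type]
      _ = ∑ y : Perm ι × Perm ι, ∑ x : ι × ι,
            (if y.1 z = x.1 ∧ y.2 z = x.2 then a y.1 y.2 else 0) := sum_comm
      _ = _ := by simp [Fintype.sum_prod_type, ite_and]
  simp only [dirDeriv_dirDeriv_detPotential hU, ← mul_sum, sum_sum_ite, mul_assoc]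

end DetPotential

section DoubleDivergence

variable {𝕜 E ι : Type*} [RCLike 𝕜] [NormedAddCommGroup E] [NormedSpace 𝕜 E]

lemma dirDeriv_comm {f : E → 𝕜} (hf : ContDiff 𝕜 2 f) (v w : E) :
    dirDeriv v (dirDeriv w f) = dirDeriv w (dirDeriv v f) := by
  funext p
  have fderiv_differentiableAt : DifferentiableAt 𝕜 (fderiv 𝕜 f) p :=
    (hf.fderiv_right (m := 1) (by norm_num)).differentiable one_ne_zero p
  have dirDeriv_dirDeriv (a b : E) :
      dirDeriv a (dirDeriv b f) p = fderiv 𝕜 (fderiv 𝕜 f) p a b := by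
    unfold dirDeriv
    rw [fderiv_clm_apply fderiv_differentiableAt (differentiableAt_const b)]
    simp
  rw [dirDeriv_dirDeriv, dirDeriv_dirDeriv]
  exact hf.contDiffAt.isSymmSndFDerivAt (by simp) v w

variable {v w : ι → E} {U : E → 𝕜}

lemma dirDeriv_left_mixedDeriv_comm (hU : ContDiff 𝕜 3 U) (i μ ν : ι) :
    dirDeriv (v i) (mixedDeriv v w U μ ν) = dirDeriv (v μ) (mixedDeriv v w U i ν) :=
  dirDeriv_comm (contDiff_dirDeriv hU (by norm_num) _) _ _

lemma dirDeriv_right_mixedDeriv_comm (hU : ContDiff 𝕜 3 U) (i μ ν : ι) :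
    dirDeriv (w i) (mixedDeriv v w U μ ν) = dirDeriv (w ν) (mixedDeriv v w U μ i) := by
  have hwU (ν : ι) : ContDiff 𝕜 2 (dirDeriv (w ν) U) := contDiff_dirDeriv hU (by norm_num) _
  unfold mixedDeriv
  rw [dirDeriv_comm (hwU ν), dirDeriv_comm (hU.of_le (by norm_num)) (w i), dirDeriv_comm (hwU i)]

variable [Fintype ι] [DecidableEq ι]

lemma sum_sign_mul_dirDeriv_dirDeriv_mixedDerivProd_mul (hU : ContDiff 𝕜 4 U) (z : ι)
    (σ : Perm ι) (u p : E) :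
    ∑ τ : Perm ι, ((Perm.sign τ : ℤ) : 𝕜) *
        dirDeriv u (dirDeriv (w (τ z)) fun q ↦ mixedDerivProd z v w U σ τ q * U q) p
      = ∑ τ : Perm ι, ((Perm.sign τ : ℤ) : 𝕜) *
        dirDeriv u (fun q ↦ mixedDerivProd z v w U σ τ q * dirDeriv (w (τ z)) U q) p := by
  have inner_eq : (fun q ↦ ∑ τ : Perm ι, ((Perm.sign τ : ℤ) : 𝕜) *
        dirDeriv (w (τ z)) (fun q ↦ mixedDerivProd z v w U σ τ q * U q) q)
      = fun q ↦ ∑ τ : Perm ι, ((Perm.sign τ : ℤ) : 𝕜) *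
        (mixedDerivProd z v w U σ τ q * dirDeriv (w (τ z)) U q) := by
    funext q
    exact sum_sign_mul_dirDeriv_prod_erase_mul z w
      (fun k ν ↦
        (contDiff_mixedDeriv (m := 2) hU (by norm_num) (σ k) ν).differentiable two_ne_zero q)
      (hU.differentiable four_ne_zero q)
      (fun k i j ↦ congrFun (dirDeriv_right_mixedDeriv_comm (hU.of_le (by norm_num)) i (σ k) j) q)
  have lhs_differentiable (τ : Perm ι) : Differentiable 𝕜
      (dirDeriv (w (τ z)) fun q ↦ mixedDerivProd z v w U σ τ q * U q) :=
    have hprod := contDiff_mixedDerivProd_mul (m := 2) (v := v) (w := w) hU (by norm_num) z σ τ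
    (contDiff_dirDeriv (m := 1) hprod (by norm_num) _).differentiable one_ne_zero
  have rhs_differentiable (τ : Perm ι) : Differentiable 𝕜
      (fun q ↦ mixedDerivProd z v w U σ τ q * dirDeriv (w (τ z)) U q) :=
    ((contDiff_mixedDerivProd (m := 2) hU (by norm_num) z σ τ).differentiable two_ne_zero).mul
      ((contDiff_dirDeriv (m := 3) hU (by norm_num) _).differentiable three_ne_zero)
  have outer_eq := congrFun (congrArg (dirDeriv u) inner_eq) p
  rwa [dirDeriv_sum_const_mul fun τ _ ↦ lhs_differentiable τ,
    dirDeriv_sum_const_mul fun τ _ ↦ rhs_differentiable τ] at outer_eq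

lemma sum_sign_mul_dirDeriv_mixedDerivProd_mul_dirDeriv (hU : ContDiff 𝕜 4 U) (z : ι)
    (τ : Perm ι) (p : E) :
    ∑ σ : Perm ι, ((Perm.sign σ : ℤ) : 𝕜) *
        dirDeriv (v (σ z)) (fun q ↦ mixedDerivProd z v w U σ τ q * dirDeriv (w (τ z)) U q) p
      = ∑ σ : Perm ι, ((Perm.sign σ : ℤ) : 𝕜) * ∏ k, mixedDeriv v w U (σ k) (τ k) p := by
  simp only [← prod_erase_mul univ _ (mem_univ z)]
  exact sum_sign_mul_dirDeriv_prod_erase_mul z v (F := fun k μ ↦ mixedDeriv v w U μ (τ k))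
    (fun k μ ↦ (contDiff_mixedDeriv (m := 2) hU (by norm_num) μ (τ k)).differentiable two_ne_zero p)
    ((contDiff_dirDeriv (m := 3) hU (by norm_num) _).differentiable three_ne_zero p)
    (fun k i j ↦ congrFun (dirDeriv_left_mixedDeriv_comm (hU.of_le (by norm_num)) i j (τ k)) p)

lemma sum_sign_mul_sum_sign_mul_dirDeriv_dirDeriv_eq_factorial_mul_det (hU : ContDiff 𝕜 4 U)
    (z : ι) (p : E) :
    ∑ σ : Perm ι, ((Perm.sign σ : ℤ) : 𝕜) * ∑ τ : Perm ι, ((Perm.sign τ : ℤ) : 𝕜) *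
        dirDeriv (v (σ z)) (dirDeriv (w (τ z)) fun q ↦ mixedDerivProd z v w U σ τ q * U q) p
      = ((Fintype.card ι).factorial : 𝕜) * (of fun μ ν ↦ mixedDeriv v w U μ ν p).det :=
  calc
    _ = ∑ σ : Perm ι, ((Perm.sign σ : ℤ) : 𝕜) * ∑ τ : Perm ι, ((Perm.sign τ : ℤ) : 𝕜) *
        dirDeriv (v (σ z)) (fun q ↦ mixedDerivProd z v w U σ τ q * dirDeriv (w (τ z)) U q) p := by
      simp only [sum_sign_mul_dirDeriv_dirDeriv_mixedDerivProd_mul hU]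
    _ = ∑ τ : Perm ι, ((Perm.sign τ : ℤ) : 𝕜) * ∑ σ : Perm ι, ((Perm.sign σ : ℤ) : 𝕜) *
        dirDeriv (v (σ z)) (fun q ↦ mixedDerivProd z v w U σ τ q * dirDeriv (w (τ z)) U q) p := by
      simp only [mul_sum]
      rw [sum_comm]
      exact sum_congr rfl fun τ _ ↦ sum_congr rfl fun σ _ ↦ mul_left_comm _ _ _
    _ = ∑ τ : Perm ι, ((Perm.sign τ : ℤ) : 𝕜) * ∑ σ : Perm ι, ((Perm.sign σ : ℤ) : 𝕜) *
        ∏ k, mixedDeriv v w U (σ k) (τ k) p := by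
      simp only [sum_sign_mul_dirDeriv_mixedDerivProd_mul_dirDeriv hU]
    _ = _ := sum_sign_mul_sum_sign_mul_prod_eq_factorial_mul_det
      (of fun μ ν ↦ mixedDeriv v w U μ ν p)

variable (v w) in
theorem det_mixed_derivatives_eq_double_divergence_general (hU : ContDiff 𝕜 4 U) (z : ι) (p : E) :
    (of fun μ ν ↦ dirDeriv (v μ) (dirDeriv (w ν) U) p).det
      = (1 / (Fintype.card ι : 𝕜)) *
        ∑ μ, ∑ ν, dirDeriv (v μ) (dirDeriv (w ν) (detPotential z v w U μ ν)) p := by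
  have card_pos : 0 < Fintype.card ι := Fintype.card_pos_iff.mpr ⟨z⟩
  have card_ne_zero : (Fintype.card ι : 𝕜) ≠ 0 := Nat.cast_ne_zero.mpr card_pos.ne'
  have factorial_ne_zero : ((Fintype.card ι - 1).factorial : 𝕜) ≠ 0 :=
    Nat.cast_ne_zero.mpr (Nat.factorial_ne_zero _)
  rw [sum_sum_dirDeriv_dirDeriv_detPotential hU,
    sum_sign_mul_sum_sign_mul_dirDeriv_dirDeriv_eq_factorial_mul_det hU,
    ← Nat.mul_factorial_pred card_pos.ne']
  push_cast
  field_simp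
  rfl

end DoubleDivergence

/-- **The determinant of mixed second derivatives is a double divergence.**
For a smooth two-point function `U` with `P_{μν} = ∂²U/∂x_μ∂y_ν`, one has
`det P = (1/n) Σ_{μ,ν} ∂²/∂x_μ∂y_ν G^{νμ}`, where
`G^{νμ} = (1/(n-1)!) Σ_{σ(1)=μ, τ(1)=ν} sign(σ) sign(τ) (∏_{k=2}^n P_{σ(k)τ(k)}) · U`. -/
theorem det_mixed_derivatives_eq_double_divergence
    (n : ℕ) (hn : 1 ≤ n)
    (U : (Fin n → ℝ) × (Fin n → ℝ) → ℝ) (hU : ContDiff ℝ (⊤ : ℕ∞) U)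
    (p : (Fin n → ℝ) × (Fin n → ℝ)) :
    Matrix.det (Matrix.of fun μ ν : Fin n => pderivX n (pderivY n U ν) μ p)
      = (1 / (n : ℝ)) * ∑ μ : Fin n, ∑ ν : Fin n,
          pderivX n (pderivY n
            (fun q => (1 / (Nat.factorial (n - 1) : ℝ))
              * ∑ σ : Equiv.Perm (Fin n), ∑ τ : Equiv.Perm (Fin n),
                  (if σ ⟨0, hn⟩ = μ ∧ τ ⟨0, hn⟩ = ν then
                    ((Equiv.Perm.sign σ : ℤ) : ℝ) * ((Equiv.Perm.sign τ : ℤ) : ℝ)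
                      * (∏ k ∈ Finset.univ.erase (⟨0, hn⟩ : Fin n),
                          pderivX n (pderivY n U (τ k)) (σ k) q) * U q
                   else 0)) ν) μ p := by
  have h := det_mixed_derivatives_eq_double_divergence_general (fun μ ↦ (Pi.single μ 1, 0))
    (fun ν ↦ (0, Pi.single ν 1)) (hU.of_le (by norm_cast)) ⟨0, hn⟩ p
  unfold detPotential at h
  rwa [Fintype.card_fin] at h
end

section
/- Let n ≥ 1 and let U : ℝⁿ × ℝⁿ → ℝ be a smooth (C^∞) function with compact support. Define the n×n matrix P(x,y) by P_{μν}(x,y) = ∂²U/∂x_μ∂y_ν(x,y). Then ∫_{ℝⁿ×ℝⁿ} det(P(x,y)) dx dy = 0; that is, the integral of the determinant of the matrix of mixed second partial derivatives of any compactly supported smooth two-point function vanishes. -/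
open Matrix MeasureTheory

/-!
Fix `ν`, put `f = ∂U/∂y_ν` and expand `det P` along the entries `∂f/∂x_μ`: it becomes
`∑ μ, ∂f/∂x_μ · C_μ` with cofactors `C_μ`. By Piola's identity the cofactors of a Jacobian matrix
form a divergence-free vector field: each term of `∑ μ, ∂C_μ/∂x_μ` contracts a symmetric Hessian
with a determinant that is antisymmetric in the same two indices. Integrating by parts moves the
derivatives from the compactly supported `f` to the cofactors, where they cancel.
-/

section Algebra

variable {ι R : Type*} [Fintype ι] [CommRing R]

theorem sum_mul_eq_zero_of_symm_of_antisymm {S D : ι → ι → R} (hS : ∀ k l, S k l = S l k)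
    (hD : ∀ k l, D k l = -D l k) (hD_diag : ∀ k, D k k = 0) :
    ∑ k, ∑ l, S k l * D k l = 0 := by
  classical
  rw [← Fintype.sum_prod_type']
  refine Finset.sum_involution (fun kl _ => kl.swap) (fun ⟨k, l⟩ _ => ?_)
    (fun ⟨k, l⟩ _ hne heq => ?_) (fun _ _ => Finset.mem_univ _) (fun kl _ => kl.swap_swap)
  · simp only [Prod.fst_swap, Prod.snd_swap]
    rw [hS l k, hD l k, mul_neg, add_neg_cancel]
  · obtain rfl : l = k := congrArg Prod.fst heq
    exact hne (by rw [hD_diag, mul_zero])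

variable [DecidableEq ι]

theorem det_updateRow_eq_sum (A : Matrix ι ι R) (i : ι) (b : ι → R) :
    (A.updateRow i b).det = ∑ k, b k * (A.updateRow i (Pi.single k 1)).det := by
  rw [det_eq_sum_mul_adjugate_row _ i]
  simp only [adjugate_apply, updateRow_idem, updateRow_self]

theorem det_updateRow_updateRow_swap (A : Matrix ι ι R) {i j : ι} (hij : i ≠ j) (a b : ι → R) :
    ((A.updateRow i a).updateRow j b).det = -((A.updateRow i b).updateRow j a).det := by
  have hswap : (A.updateRow i a).updateRow j b =
      ((A.updateRow i b).updateRow j a).submatrix (Equiv.swap i j) id := by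
    ext k l
    obtain rfl | hki := eq_or_ne k i
    · simp [updateRow_apply, hij]
    obtain rfl | hkj := eq_or_ne k j
    · simp [updateRow_apply, hij]
    · simp [updateRow_apply, Equiv.swap_apply_of_ne_of_ne, hki, hkj]
  rw [hswap, det_permute, Equiv.Perm.sign_swap hij]
  simp

theorem sum_det_updateRow_single_updateRow_eq_zero (A : Matrix ι ι R) {i j : ι} (hij : i ≠ j)
    {S : Matrix ι ι R} (hS : S.IsSymm) :
    ∑ k, ((A.updateRow i (Pi.single k 1)).updateRow j (S k)).det = 0 := by
  have hdiag (k : ι) :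
      ((A.updateRow i (Pi.single k 1)).updateRow j (Pi.single k 1)).det = 0 :=
    det_zero_of_row_eq hij (by rw [updateRow_ne hij, updateRow_self, updateRow_self])
  simp_rw [det_updateRow_eq_sum _ j (S _)]
  exact sum_mul_eq_zero_of_symm_of_antisymm (fun k l => hS.apply l k)
    (fun k l => det_updateRow_updateRow_swap A hij _ _) hdiag

end Algebra

section DetCalculus

variable {ι 𝕜 𝔸 E : Type*} [Fintype ι] [DecidableEq ι] [NontriviallyNormedField 𝕜]
  [NormedCommRing 𝔸] [NormedAlgebra 𝕜 𝔸] [NormedAddCommGroup E] [NormedSpace 𝕜 E]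
  {M : E → Matrix ι ι 𝔸} {p : E}

variable (ι 𝕜 𝔸) in
/-- The determinant over a normed algebra, as a continuous multilinear map of the rows over the
base field. This form gives access to the calculus of multilinear maps without a norm on
matrices. -/
def detRowContinuousMultilinear : ContinuousMultilinearMap 𝕜 (fun _ : ι => ι → 𝔸) 𝔸 where
  toMultilinearMap := (detRowAlternating (n := ι) (R := 𝔸)).toMultilinearMap.restrictScalars 𝕜
  cont := continuous_id.matrix_det

theorem contDiffAt_det {r : WithTop ℕ∞} (hM : ∀ i j, ContDiffAt 𝕜 r (fun q => M q i j) p) :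
    ContDiffAt 𝕜 r (fun q => (M q).det) p :=
  (detRowContinuousMultilinear ι 𝕜 𝔸).contDiff.contDiffAt.comp p
    (contDiffAt_pi.2 fun i => contDiffAt_pi.2 (hM i))

theorem fderiv_det_apply (hM : ∀ i j, DifferentiableAt 𝕜 (fun q => M q i j) p) (w : E) :
    fderiv 𝕜 (fun q => (M q).det) p w =
      ∑ i, ((M p).updateRow i fun j => fderiv 𝕜 (fun q => M q i j) p w).det := by
  have hdet : HasFDerivAt (fun q => (M q).det) _ p :=
    HasFDerivAt.multilinear_comp (f := detRowContinuousMultilinear ι 𝕜 𝔸)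
      fun i => hasFDerivAt_pi.2 fun j => (hM i j).hasFDerivAt
  rw [hdet.fderiv, _root_.sum_apply]
  rfl

end DetCalculus

section Jacobian

variable {ι 𝕜 𝔸 E F : Type*} [NontriviallyNormedField 𝕜] [NormedCommRing 𝔸] [NormedAlgebra 𝕜 𝔸]
  [NormedAddCommGroup E] [NormedSpace 𝕜 E] [NormedAddCommGroup F] [NormedSpace 𝕜 F]

theorem fderiv_fderiv_apply_comm [IsRCLikeNormedField 𝕜] {g : E → F} {p : E}
    (hg : ContDiffAt 𝕜 2 g p) (a b : E) :
    fderiv 𝕜 (fun q => fderiv 𝕜 g q a) p b = fderiv 𝕜 (fun q => fderiv 𝕜 g q b) p a := by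
  have hg' : DifferentiableAt 𝕜 (fderiv 𝕜 g) p :=
    (hg.fderiv_right (m := 1) (by norm_num)).differentiableAt one_ne_zero
  have hsymm : IsSymmSndFDerivAt 𝕜 g p := hg.isSymmSndFDerivAt (by simp)
  rw [fderiv_clm_apply hg' (differentiableAt_const a),
    fderiv_clm_apply hg' (differentiableAt_const b)]
  simpa using hsymm b a

variable (𝕜) in
/-- The Jacobian matrix of the functions `f i` along the directions `v j`: rows are indexed by the
functions and columns by the directions, which need not be linearly independent. -/
noncomputable def directionalJacobian (f : ι → E → 𝔸) (v : ι → E) (p : E) : Matrix ι ι 𝔸 :=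
  of fun i j => fderiv 𝕜 (f i) p (v j)

variable [DecidableEq ι] {f : ι → E → 𝔸} {i : ι} {p : E}

theorem contDiffAt_updateRow_directionalJacobian_apply {r : WithTop ℕ∞}
    (hf : ∀ j ≠ i, ContDiffAt 𝕜 (r + 1) (f j) p) (v : ι → E) (b : ι → 𝔸) (j l : ι) :
    ContDiffAt 𝕜 r (fun q => (directionalJacobian 𝕜 f v q).updateRow i b j l) p := by
  obtain rfl | hji := eq_or_ne j i
  · simpa only [updateRow_self] using contDiffAt_const
  · simpa only [updateRow_ne hji, directionalJacobian, of_apply] using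
      ((hf j hji).fderiv_right le_rfl).clm_apply contDiffAt_const

variable [Fintype ι]

theorem contDiffAt_adjugate_directionalJacobian_apply {r : WithTop ℕ∞}
    (hf : ∀ j ≠ i, ContDiffAt 𝕜 (r + 1) (f j) p) (v : ι → E) (k : ι) :
    ContDiffAt 𝕜 r (fun q => (directionalJacobian 𝕜 f v q).adjugate k i) p := by
  simp_rw [adjugate_apply]
  exact contDiffAt_det (contDiffAt_updateRow_directionalJacobian_apply hf v _)

theorem sum_fderiv_adjugate_directionalJacobian_eq_zero [IsRCLikeNormedField 𝕜]
    (hf : ∀ j ≠ i, ContDiffAt 𝕜 2 (f j) p) (v : ι → E) :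
    ∑ k, fderiv 𝕜 (fun q => (directionalJacobian 𝕜 f v q).adjugate k i) p (v k) = 0 := by
  have hdiff (k j l : ι) : DifferentiableAt 𝕜
      (fun q => (directionalJacobian 𝕜 f v q).updateRow i (Pi.single k 1) j l) p :=
    (contDiffAt_updateRow_directionalJacobian_apply (r := 1)
      (by simpa only [one_add_one_eq_two] using hf) v _ j l).differentiableAt one_ne_zero
  simp_rw [adjugate_apply, fderiv_det_apply (hdiff _)]
  rw [Finset.sum_comm]
  refine Finset.sum_eq_zero fun j _ => ?_
  obtain rfl | hji := eq_or_ne j i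
  · refine Finset.sum_eq_zero fun k _ => det_eq_zero_of_row_eq_zero j fun l => ?_
    simp only [updateRow_self, fderiv_fun_const, Pi.zero_apply, _root_.zero_apply]
  · have hessian_symm :
        (of fun k l => fderiv 𝕜 (fun q => fderiv 𝕜 (f j) q (v l)) p (v k)).IsSymm :=
      IsSymm.ext fun k l => fderiv_fderiv_apply_comm (hf j hji) _ _
    simp_rw [updateRow_ne hji]
    exact sum_det_updateRow_single_updateRow_eq_zero _ hji.symm hessian_symm

end Jacobian

section Integration

variable {ι 𝕜 E : Type*} [Fintype ι] [RCLike 𝕜] [NormedAddCommGroup E] [NormedSpace ℝ E]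
  [FiniteDimensional ℝ E] [MeasurableSpace E] [BorelSpace E] (m : Measure E) [m.IsAddHaarMeasure]

theorem integral_sum_fderiv_mul_eq_neg {g : E → 𝕜} (hg : ContDiff ℝ 1 g)
    (hg_supp : HasCompactSupport g) {X : ι → E → 𝕜} (hX : ∀ k, ContDiff ℝ 1 (X k)) (v : ι → E) :
    ∫ p, ∑ k, fderiv ℝ g p (v k) * X k p ∂m = -∫ p, g p * ∑ k, fderiv ℝ (X k) p (v k) ∂m := by
  have hgX (k : ι) : Integrable (fun p => g p * X k p) m :=
    (hg.continuous.mul (hX k).continuous).integrable_of_hasCompactSupport hg_supp.mul_right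
  have hg'X (k : ι) : Integrable (fun p => fderiv ℝ g p (v k) * X k p) m :=
    (((hg.continuous_fderiv one_ne_zero).clm_apply continuous_const).mul
      (hX k).continuous).integrable_of_hasCompactSupport (hg_supp.fderiv_apply ℝ (v k)).mul_right
  have hgX' (k : ι) : Integrable (fun p => g p * fderiv ℝ (X k) p (v k)) m :=
    (hg.continuous.mul (((hX k).continuous_fderiv one_ne_zero).clm_apply
      continuous_const)).integrable_of_hasCompactSupport hg_supp.mul_right
  simp_rw [Finset.mul_sum]
  rw [integral_finsetSum _ fun k _ => hg'X k, integral_finsetSum _ fun k _ => hgX' k,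
    ← Finset.sum_neg_distrib]
  refine Finset.sum_congr rfl fun k _ => ?_
  rw [integral_mul_fderiv_eq_neg_fderiv_mul_of_integrable (hg'X k) (hgX' k) (hgX k)
    (fun p _ => hg.differentiable one_ne_zero p) (fun p _ => (hX k).differentiable one_ne_zero p),
    neg_neg]

variable [DecidableEq ι]

theorem integral_det_directionalJacobian_eq_zero {f : ι → E → 𝕜} {i : ι} (hfi : ContDiff ℝ 1 (f i))
    (hfi_supp : HasCompactSupport (f i)) (hf : ∀ j ≠ i, ContDiff ℝ 2 (f j)) (v : ι → E) :
    ∫ p, (directionalJacobian ℝ f v p).det ∂m = 0 := by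
  have hcofactor (k : ι) :
      ContDiff ℝ 1 fun p => (directionalJacobian ℝ f v p).adjugate k i :=
    contDiff_iff_contDiffAt.2 fun p => contDiffAt_adjugate_directionalJacobian_apply
      (fun j hji => by simpa only [one_add_one_eq_two] using (hf j hji).contDiffAt) v k
  calc ∫ p, (directionalJacobian ℝ f v p).det ∂m
      = ∫ p, ∑ k, fderiv ℝ (f i) p (v k) * (directionalJacobian ℝ f v p).adjugate k i ∂m := by
        simp_rw [det_eq_sum_mul_adjugate_row _ i]; rfl
    _ = -∫ p, f i p *
          ∑ k, fderiv ℝ (fun q => (directionalJacobian ℝ f v q).adjugate k i) p (v k) ∂m :=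
        integral_sum_fderiv_mul_eq_neg m hfi hfi_supp hcofactor v
    _ = 0 := by
        simp_rw [sum_fderiv_adjugate_directionalJacobian_eq_zero
          (fun j hji => (hf j hji).contDiffAt) v, mul_zero, integral_zero, neg_zero]

theorem integral_det_mixed_derivatives_eq_zero_general [Nonempty ι] {U : E → 𝕜}
    (hU : ContDiff ℝ 3 U) (hsupp : HasCompactSupport U) (v w : ι → E) :
    ∫ p, det (of fun μ ν => fderiv ℝ (fun q => fderiv ℝ U q (w ν)) p (v μ)) ∂m = 0 := by
  obtain ⟨i⟩ := ‹Nonempty ι›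
  have hderiv (ν : ι) : ContDiff ℝ 2 fun q => fderiv ℝ U q (w ν) :=
    (hU.fderiv_right (by norm_num)).clm_apply contDiff_const
  have h := integral_det_directionalJacobian_eq_zero m ((hderiv i).of_le one_le_two)
    (hsupp.fderiv_apply ℝ (w i)) (fun ν _ => hderiv ν) v
  simp_rw [← det_transpose (directionalJacobian _ _ _ _)] at h
  exact h

end Integration

/-- **Vanishing of the integrated heat determinant.**
For a smooth compactly supported two-point function `U` on `ℝⁿ × ℝⁿ` with
`P_{μν}(x,y) = ∂²U/∂x_μ∂y_ν(x,y)`, the integral of `det P` over `ℝⁿ × ℝⁿ`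
vanishes. -/
theorem integral_det_mixed_derivatives_eq_zero
    (n : ℕ) (hn : 1 ≤ n)
    (U : (Fin n → ℝ) × (Fin n → ℝ) → ℝ)
    (hU : ContDiff ℝ (⊤ : ℕ∞) U) (hsupp : HasCompactSupport U) :
    (∫ p : (Fin n → ℝ) × (Fin n → ℝ),
        Matrix.det (Matrix.of fun μ ν : Fin n => pderivX n (pderivY n U ν) μ p)) = 0 := by
  have : Nonempty (Fin n) := ⟨⟨0, hn⟩⟩
  have : (volume : Measure ((Fin n → ℝ) × (Fin n → ℝ))).IsAddHaarMeasure :=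
    Measure.prod.instIsAddHaarMeasure _ _
  exact integral_det_mixed_derivatives_eq_zero_general _ (contDiff_infty.1 hU 3) hsupp _ _
end

section
/- Let n ≥ 1 and let C and B be symmetric n×n real matrices. Define Sym(C⊗C⊗B)(μ₁,…,μ₆) = (1/6!) Σ_{σ ∈ S₆} C_{μ_{σ(1)}μ_{σ(2)}} C_{μ_{σ(3)}μ_{σ(4)}} B_{μ_{σ(5)}μ_{σ(6)}}. Then Σ_{i,j,k=1}^{n} Sym(C⊗C⊗B)(i,i,j,j,k,k) = (1/15)( (tr C)² tr B + 2 tr(C²) tr B + 4 tr(C) tr(CB) + 8 tr(C²B) ). -/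
open Matrix

/-!
Read a symmetrized tensor as a homogeneous polynomial. Setting two of its indices equal and summing
over their common value then amounts to applying the Laplacian `∑ a, ∂ₐ ∂ₐ`, where `∂ₐ` inserts the
index `a` into each slot in turn. On a product of symmetric matrices, the two inserted indices
either fall into the same factor and give its trace, or fall into two factors and join them into
their matrix product. Each Laplacian thus removes one factor, and the full contraction of
`A ⊗ B ⊗ D` is computed by applying it three times.
-/

variable {ι R : Type*} {m : ℕ}

section Symmetrization

variable [Semiring R]

/-- The symmetrization of a tensor with `m` slots, without the normalization `1 / m!`. -/
def permSum : ((Fin m → ι) → R) →ₗ[R] (Fin m → ι) → R :=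
  ∑ σ : Equiv.Perm (Fin m), LinearMap.funLeft R R (· ∘ σ)

/-- The sum of the contractions of a tensor with the basis vector `a` in each of its slots: the
partial derivative `∂ₐ`, when tensors are read as polynomials. -/
def insertSum (a : ι) : ((Fin (m + 1) → ι) → R) →ₗ[R] (Fin m → ι) → R :=
  ∑ p : Fin (m + 1), LinearMap.funLeft R R fun x : Fin m → ι ↦ p.insertNth a x

/-- The Laplacian `∑ a, ∂ₐ ∂ₐ`, when tensors are read as polynomials. -/
def laplacian [Fintype ι] : ((Fin (m + 2) → ι) → R) →ₗ[R] (Fin m → ι) → R :=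
  ∑ a : ι, insertSum a ∘ₗ insertSum a

theorem permSum_apply (g : (Fin m → ι) → R) (x : Fin m → ι) :
    permSum g x = ∑ σ : Equiv.Perm (Fin m), g (x ∘ σ) := by
  simp [permSum, LinearMap.funLeft_apply]

theorem insertSum_apply (a : ι) (g : (Fin (m + 1) → ι) → R) (x : Fin m → ι) :
    insertSum a g x = ∑ p : Fin (m + 1), g (p.insertNth a x) := by
  simp [insertSum, LinearMap.funLeft_apply]

theorem laplacian_apply [Fintype ι] (g : (Fin (m + 2) → ι) → R) (x : Fin m → ι) :
    laplacian g x = ∑ a, insertSum a (insertSum a g) x := by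
  simp [laplacian]

theorem permSum_comp_perm (g : (Fin m → ι) → R) (ρ : Equiv.Perm (Fin m)) :
    permSum (fun x ↦ g (x ∘ ρ)) = permSum g := by
  funext x
  simp only [permSum_apply]
  exact Equiv.sum_comp (Equiv.mulRight ρ) fun σ ↦ g (x ∘ σ)

-- This permutation sends `p` to `0` and `p.succAbove c` to `(τ c).succ`, where `q = (p, τ)`.
theorem bijective_decomposeFin_symm_zero_mul_cycleRange :
    Function.Bijective fun q : Fin (m + 1) × Equiv.Perm (Fin m) ↦
      Equiv.Perm.decomposeFin.symm (0, q.2) * q.1.cycleRange := by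
  refine (Fintype.bijective_iff_injective_and_card _).2 ⟨?_, ?_⟩
  · rintro ⟨p, τ⟩ ⟨q, υ⟩ h
    obtain rfl : p = q := by
      apply (Equiv.Perm.decomposeFin.symm (0, υ) * q.cycleRange).injective
      calc
        _ = (Equiv.Perm.decomposeFin.symm (0, τ) * p.cycleRange) p := congrArg (· p) h.symm
        _ = 0 := by simp
        _ = (Equiv.Perm.decomposeFin.symm (0, υ) * q.cycleRange) q := by simp
    simpa using h
  · simp [Fintype.card_perm, Nat.factorial_succ]

theorem vecCons_comp_decomposeFin_symm_zero_mul_cycleRange (a : ι) (x : Fin m → ι)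
    (p : Fin (m + 1)) (τ : Equiv.Perm (Fin m)) :
    vecCons a x ∘ (Equiv.Perm.decomposeFin.symm (0, τ) * p.cycleRange) =
      p.insertNth a (x ∘ τ) := by
  funext b
  refine Fin.succAboveCases p ?_ (fun c ↦ ?_) b <;> simp

theorem permSum_vecCons (g : (Fin (m + 1) → ι) → R) (a : ι) (x : Fin m → ι) :
    permSum g (vecCons a x) = permSum (insertSum a g) x := by
  simp only [permSum_apply, insertSum_apply]
  rw [← bijective_decomposeFin_symm_zero_mul_cycleRange.sum_comp, Fintype.sum_prod_type_right]
  simp only [vecCons_comp_decomposeFin_symm_zero_mul_cycleRange]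

theorem insertSum_vecCons (a b : ι) (g : (Fin (m + 2) → ι) → R) (x : Fin m → ι) :
    insertSum a g (vecCons b x) =
      g (vecCons a (vecCons b x)) + insertSum a (fun y ↦ g (vecCons b y)) x := by
  rw [insertSum_apply, insertSum_apply, Fin.sum_univ_succ, Fin.insertNth_zero']
  exact congrArg _ <| Finset.sum_congr rfl fun p _ ↦ congrArg g (Fin.insertNth_succ_cons p a b x)

theorem insertSum_vecEmpty (a : ι) (g : (Fin 1 → ι) → R) : insertSum a g ![] = g ![a] := by
  rw [insertSum_apply, Fin.sum_univ_one, Fin.insertNth_zero']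
  rfl

theorem sum_permSum_vecCons_vecCons [Fintype ι] (g : (Fin (m + 2) → ι) → R) (x : Fin m → ι) :
    ∑ a, permSum g (vecCons a (vecCons a x)) = permSum (laplacian g) x := by
  simp only [permSum_vecCons, laplacian, LinearMap.sum_apply, map_sum, Finset.sum_apply,
    LinearMap.comp_apply]

end Symmetrization

section MatrixTensors

/-- A matrix as a tensor with two slots. -/
def tensorOne (A : Matrix ι ι R) (μ : Fin 2 → ι) : R :=
  A (μ 0) (μ 1)

/-- The tensor product `A ⊗ B` of two matrices, as a tensor with four slots. -/
def tensorTwo [Mul R] (A B : Matrix ι ι R) (μ : Fin 4 → ι) : R :=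
  A (μ 0) (μ 1) * B (μ 2) (μ 3)

/-- The tensor product `A ⊗ B ⊗ D` of three matrices, as a tensor with six slots. -/
def tensorThree [Mul R] (A B D : Matrix ι ι R) (μ : Fin 6 → ι) : R :=
  A (μ 0) (μ 1) * B (μ 2) (μ 3) * D (μ 4) (μ 5)

variable [CommSemiring R]

theorem permSum_nested_eq_permSum_tensorTwo (A B : Matrix ι ι R) :
    permSum (fun μ : Fin 4 → ι ↦ A (μ 0) (μ 3) * B (μ 1) (μ 2)) = permSum (tensorTwo A B) := by
  rw [← permSum_comp_perm (tensorTwo A B) (Equiv.swap 1 3 * Equiv.swap 2 3)]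
  congr 1

variable [Fintype ι]

theorem laplacian_tensorOne (A : Matrix ι ι R) :
    laplacian (tensorOne A) = fun _ ↦ 2 * A.trace := by
  funext y
  obtain rfl : y = ![] := Subsingleton.elim _ _
  simp [laplacian_apply, insertSum_vecCons, insertSum_vecEmpty, tensorOne, trace, two_mul,
    Finset.sum_add_distrib]

theorem laplacian_tensorTwo (A B : Matrix ι ι R) :
    laplacian (tensorTwo A B) =
      tensorOne ((2 * A.trace) • B + (2 * B.trace) • A + (2 : R) • ((A + Aᵀ) * (B + Bᵀ))) := by
  funext y
  obtain ⟨b, c, rfl⟩ : ∃ b c, y = ![b, c] := ⟨_, _, (FinVec.etaExpand_eq y).symm⟩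
  have h_insert (a : ι) : insertSum a (insertSum a (tensorTwo A B)) ![b, c] =
      2 * A a a * B b c + 2 * B a a * A b c + 2 * ((A b a + A a b) * (B a c + B c a)) := by
    simp only [insertSum_vecCons, insertSum_vecEmpty, tensorTwo, cons_val]
    ring
  simp [laplacian_apply, h_insert, tensorOne, trace, mul_apply, Finset.sum_add_distrib,
    Finset.mul_sum, Finset.sum_mul]

theorem laplacian_tensorThree {A B D : Matrix ι ι R}
    (hA : A.IsSymm) (hB : B.IsSymm) (hD : D.IsSymm) :
    laplacian (tensorThree A B D) =
      (2 * A.trace) • tensorTwo B D + (2 * B.trace) • tensorTwo A D + (2 * D.trace) • tensorTwo A B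
      + (8 : R) • (tensorTwo (A * B) D + tensorTwo A (B * D)
        + fun μ ↦ (A * D) (μ 0) (μ 3) * B (μ 1) (μ 2)) := by
  funext y
  obtain ⟨b, c, d, e, rfl⟩ : ∃ b c d e, y = ![b, c, d, e] :=
    ⟨_, _, _, _, (FinVec.etaExpand_eq y).symm⟩
  have h_insert (a : ι) : insertSum a (insertSum a (tensorThree A B D)) ![b, c, d, e] =
      2 * A a a * (B b c * D d e) + 2 * B a a * (A b c * D d e) + 2 * D a a * (A b c * B d e)
      + 8 * (A b a * B a c * D d e + A b c * (B d a * D a e) + A b a * D a e * B c d) := by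
    simp only [insertSum_vecCons, insertSum_vecEmpty, tensorThree, cons_val, hA.apply b a,
      hB.apply a c, hB.apply d a, hD.apply a e]
    ring
  simp [laplacian_apply, h_insert, tensorTwo, trace, mul_apply, Finset.sum_add_distrib, mul_add,
    Finset.mul_sum, Finset.sum_mul]

theorem sum_permSum_tensorOne (A : Matrix ι ι R) :
    ∑ i, permSum (tensorOne A) ![i, i] = 2 * A.trace := by
  rw [sum_permSum_vecCons_vecCons, laplacian_tensorOne, permSum_apply, Fintype.sum_unique]

theorem sum_permSum_tensorTwo (A B : Matrix ι ι R) :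
    ∑ i, ∑ j, permSum (tensorTwo A B) ![i, i, j, j] =
      8 * (A.trace * B.trace + (A * B).trace + (A * Bᵀ).trace) := by
  have h_transpose : (Aᵀ * Bᵀ).trace = (A * B).trace := by
    rw [← transpose_mul, trace_transpose, trace_mul_comm]
  have h_transpose_left : (Aᵀ * B).trace = (A * Bᵀ).trace := by
    rw [← trace_transpose, transpose_mul, transpose_transpose, trace_mul_comm]
  rw [Finset.sum_comm]
  simp_rw [sum_permSum_vecCons_vecCons (tensorTwo A B), laplacian_tensorTwo, sum_permSum_tensorOne,
    trace_add, trace_smul, add_mul, mul_add, trace_add, h_transpose, h_transpose_left, smul_eq_mul]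
  ring

theorem sum_permSum_tensorThree {A B D : Matrix ι ι R}
    (hA : A.IsSymm) (hB : B.IsSymm) (hD : D.IsSymm) :
    ∑ i, ∑ j, ∑ k, permSum (tensorThree A B D) ![i, i, j, j, k, k] =
      48 * (A.trace * B.trace * D.trace + 2 * (A * B).trace * D.trace
        + 2 * (A * D).trace * B.trace + 2 * (B * D).trace * A.trace + 8 * (A * B * D).trace) := by
  have h_reverse : (A * D * B).trace = (A * B * D).trace := by
    rw [← trace_transpose, transpose_mul, transpose_mul, hA.eq, hB.eq, hD.eq, ← Matrix.mul_assoc,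
      trace_mul_cycle]
  rw [Finset.sum_comm]
  conv_lhs => enter [2, j]; rw [Finset.sum_comm]
  simp only [sum_permSum_vecCons_vecCons, laplacian_tensorThree hA hB hD, map_add, map_smul,
    permSum_nested_eq_permSum_tensorTwo, Pi.add_apply, Pi.smul_apply, smul_eq_mul,
    Finset.sum_add_distrib, ← Finset.mul_sum, sum_permSum_tensorTwo, transpose_mul, hB.eq, hD.eq,
    ← Matrix.mul_assoc, h_reverse]
  ring

theorem contraction_sym_CCB_general {K : Type*} [Field K] (h_factorial : (Nat.factorial 6 : K) ≠ 0)
    {A B D : Matrix ι ι K} (hA : A.IsSymm) (hB : B.IsSymm) (hD : D.IsSymm) :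
    (∑ i, ∑ j, ∑ k, (1 / (Nat.factorial 6 : K)) * ∑ σ : Equiv.Perm (Fin 6),
        A (![i, i, j, j, k, k] (σ 0)) (![i, i, j, j, k, k] (σ 1))
          * B (![i, i, j, j, k, k] (σ 2)) (![i, i, j, j, k, k] (σ 3))
          * D (![i, i, j, j, k, k] (σ 4)) (![i, i, j, j, k, k] (σ 5)))
      = (1 / 15) * (A.trace * B.trace * D.trace + 2 * (A * B).trace * D.trace
          + 2 * (A * D).trace * B.trace + 2 * (B * D).trace * A.trace
          + 8 * (A * B * D).trace) := by
  have h_contract := sum_permSum_tensorThree hA hB hD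
  simp only [permSum_apply, tensorThree, Function.comp_apply] at h_contract
  have h_scalar : 1 / (Nat.factorial 6 : K) * 48 = 1 / 15 := by
    have h_split : (Nat.factorial 6 : K) = 48 * 15 := by norm_num [Nat.factorial]
    rw [h_split] at h_factorial ⊢
    have := left_ne_zero_of_mul h_factorial
    have := right_ne_zero_of_mul h_factorial
    field_simp
  simp only [← Finset.mul_sum]
  rw [h_contract, ← mul_assoc, h_scalar]

end MatrixTensors

/-- **Contraction of the symmetrized product `C⊗C⊗B` of symmetric matrices.** With
`Sym(C⊗C⊗B)(μ₁,…,μ₆) = (1/6!) Σ_{σ ∈ S₆} C_{μ_{σ(1)}μ_{σ(2)}} C_{μ_{σ(3)}μ_{σ(4)}} B_{μ_{σ(5)}μ_{σ(6)}}`,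
one has `Σ_{i,j,k} Sym(C⊗C⊗B)(i,i,j,j,k,k)
  = (1/15)((tr C)² tr B + 2 tr(C²) tr B + 4 tr(C) tr(CB) + 8 tr(C²B))`. -/
theorem contraction_sym_CCB
    (n : ℕ) (hn : 1 ≤ n)
    (C B : Matrix (Fin n) (Fin n) ℝ) (hC : C.IsSymm) (hB : B.IsSymm) :
    (∑ i : Fin n, ∑ j : Fin n, ∑ k : Fin n,
        (1 / (Nat.factorial 6 : ℝ)) * ∑ σ : Equiv.Perm (Fin 6),
          C (![i, i, j, j, k, k] (σ 0)) (![i, i, j, j, k, k] (σ 1))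
            * C (![i, i, j, j, k, k] (σ 2)) (![i, i, j, j, k, k] (σ 3))
            * B (![i, i, j, j, k, k] (σ 4)) (![i, i, j, j, k, k] (σ 5)))
      = (1 / 15) * (C.trace ^ 2 * B.trace + 2 * (C * C).trace * B.trace
          + 4 * C.trace * (C * B).trace + 8 * (C * C * B).trace) := by
  rw [contraction_sym_CCB_general (by positivity) hC hC hB]
  ring
end

section
/- Let n ≥ 1 and let A : {1,…,n}⁴ → ℝ be fully symmetric (invariant under all permutations of its four arguments). Define Sym(A⊗I)(μ₁,…,μ₆) = (1/6!) Σ_{σ ∈ S₆} A(μ_{σ(1)},μ_{σ(2)},μ_{σ(3)},μ_{σ(4)}) δ_{μ_{σ(5)}μ_{σ(6)}}, where δ is the Kronecker delta. Then Σ_{i,j,k=1}^{n} Sym(A⊗I)(i,i,j,j,k,k) = ((n+4)/5) Σ_{μ,ν=1}^{n} A(μ,μ,ν,ν). -/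
open Matrix

/-!
Summing `A ⊗ I` over all index values constant on the pairs of a perfect matching of the six legs
gives the full trace of `A`, times `n` if the two legs of `I` are matched with each other: in either
case the delta leaves on `A` the doubled multiset of the two other index values, and a symmetric
tensor depends only on the multiset of its arguments. Permuting the legs permutes the matchings, and
a given leg is as likely to be matched with any one of the five others, so averaging over `S₆` gives
`(n + 4) / 5` traces. The argument works for tensors of any even order.
-/

open Finset

theorem card_sub_one_nsmul_sum_perm {X M : Type*} [Fintype X] [DecidableEq X] [AddCommMonoid M]
    (w : X → X → M) {a b : X} (hab : a ≠ b) :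
    (Fintype.card X - 1) • ∑ σ : Equiv.Perm X, w (σ a) (σ b) =
      ∑ σ : Equiv.Perm X, ∑ x ∈ univ.erase (σ a), w (σ a) x := by
  have sum_eq_of_ne (x : X) (hx : x ∈ univ.erase a) :
      ∑ σ : Equiv.Perm X, w (σ a) (σ x) = ∑ σ : Equiv.Perm X, w (σ a) (σ b) :=
    Fintype.sum_equiv (Equiv.mulRight (Equiv.swap b x)) _ _ fun σ ↦ by
      simp [Equiv.swap_apply_of_ne_of_ne hab (ne_of_mem_erase hx).symm]
  calc (Fintype.card X - 1) • ∑ σ : Equiv.Perm X, w (σ a) (σ b)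
      = ∑ x ∈ univ.erase a, ∑ σ : Equiv.Perm X, w (σ a) (σ x) := by
        rw [sum_congr rfl sum_eq_of_ne, sum_const, card_erase_of_mem (mem_univ a), card_univ]
    _ = ∑ σ : Equiv.Perm X, ∑ x ∈ univ.erase a, w (σ a) (σ x) := sum_comm
    _ = ∑ σ : Equiv.Perm X, ∑ x ∈ univ.erase (σ a), w (σ a) x :=
        sum_congr rfl fun σ _ ↦ sum_equiv σ (by simp) (fun _ _ ↦ rfl)

section Pairings

variable {X κ : Type*} [Fintype X] [DecidableEq κ]

/-- A perfect matching of `X`, encoded as a map sending each point to the label of its pair. -/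
def IsPairing (p : X → κ) : Prop :=
  ∀ c, #{t | p t = c} = 2

theorem IsPairing.comp_perm {p : X → κ} (hp : IsPairing p) (σ : Equiv.Perm X) :
    IsPairing (p ∘ σ) := fun c ↦ by
  rw [← hp c, ← card_map σ.toEmbedding]
  congr 1
  ext t
  simp [Finset.mem_map_equiv]

theorem IsPairing.map_univ_comp [Fintype κ] {ι : Type*} {p : X → κ} (hp : IsPairing p)
    (i : κ → ι) : univ.val.map (i ∘ p) = 2 • univ.val.map i := by
  have map_label : univ.val.map p = 2 • (univ : Finset κ).val := by
    ext c
    rw [Multiset.count_map, Multiset.count_nsmul, Multiset.count_univ, mul_one, ← hp c]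
    simp only [eq_comm, Finset.card_def, Finset.filter_val]
  rw [← Multiset.map_map, map_label, Multiset.map_nsmul]

theorem IsPairing.sum_erase_ite [DecidableEq X] {R : Type*} [CommRing R] {p : X → κ}
    (hp : IsPairing p) (a : X) (u : R) :
    ∑ x ∈ univ.erase a, (if p a = p x then u else 1) = u + (Fintype.card X - 2) := by
  have sum_univ : ∑ x, (if p a = p x then u else 1) = 2 * u + (Fintype.card X - 2) := by
    have ite_eq_add (x : X) :
        (if p a = p x then u else 1) = (if p x = p a then u - 1 else 0) + 1 := by
      split_ifs <;> simp_all
    simp only [ite_eq_add, sum_add_distrib, ← sum_filter, sum_const, hp (p a), card_univ,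
      nsmul_eq_mul]
    push_cast
    ring
  rw [sum_erase_eq_sub (mem_univ a), sum_univ, if_pos rfl]
  ring

theorem IsPairing.sum_perm_ite [DecidableEq X] {R : Type*} [CommRing R] {p : X → κ}
    (hp : IsPairing p) {a b : X} (hab : a ≠ b) (u : R) :
    (Fintype.card X - 1) * ∑ σ : Equiv.Perm X, (if p (σ a) = p (σ b) then u else 1) =
      Nat.factorial (Fintype.card X) * (u + (Fintype.card X - 2)) := by
  have average := card_sub_one_nsmul_sum_perm (fun x y ↦ if p x = p y then u else 1) hab
  simpa only [hp.sum_erase_ite, sum_const, card_univ, Fintype.card_perm, nsmul_eq_mul,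
    Nat.cast_pred (Fintype.card_pos_iff.mpr ⟨a⟩)] using average

end Pairings

section Tuples

variable {ι : Type*}

theorem exists_perm_comp_eq_of_map_univ_eq {X : Type*} [Fintype X] {μ ν : X → ι}
    (h : univ.val.map μ = univ.val.map ν) : ∃ π : Equiv.Perm X, ν ∘ π = μ := by
  classical
  have fiber_equiv (c : ι) : Nonempty ({t // μ t = c} ≃ {t // ν t = c}) := by
    have count_eq := congrArg (Multiset.count c) h
    simp only [Multiset.count_map, ← Finset.filter_val, ← Finset.card_def] at count_eq
    rw [← Fintype.card_eq, Fintype.card_subtype, Fintype.card_subtype]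
    simpa only [eq_comm] using count_eq
  let e (c : ι) := (fiber_equiv c).some
  exact ⟨Equiv.ofFiberEquiv e, funext (Equiv.ofFiberEquiv_map e)⟩

theorem map_univ_eq_cons {m : ℕ} (μ : Fin (m + 1) → ι) (c : Fin (m + 1)) :
    univ.val.map μ = μ c ::ₘ univ.val.map (μ ∘ c.succAbove) := by
  rw [Fin.univ_succAbove m c, Finset.cons_val, Multiset.map_cons, map_val, Multiset.map_map]
  rfl

theorem map_univ_eq_cons_cons {N : ℕ} (μ : Fin (N + 2) → ι) :
    univ.val.map μ = μ (Fin.last (N + 1)) ::ₘ μ (Fin.last N).castSucc ::ₘ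
      univ.val.map fun t : Fin N ↦ μ t.castSucc.castSucc := by
  rw [map_univ_eq_cons μ (Fin.last _), map_univ_eq_cons _ (Fin.last N)]
  simp only [Fin.succAbove_last, Function.comp_def]

theorem sum_eq_sum_insertNth [Fintype ι] {M : Type*} [AddCommMonoid M] {m : ℕ} (c : Fin (m + 1))
    (f : (Fin (m + 1) → ι) → M) :
    ∑ i, f i = ∑ x, ∑ j : Fin m → ι, f (c.insertNth x j) := by
  rw [← (Fin.insertNthEquiv (fun _ ↦ ι) c).sum_comp, Fintype.sum_prod_type]
  rfl

theorem sum_comp_double_two [Fintype ι] {M : Type*} [AddCommMonoid M] (f : (Fin 4 → ι) → M) :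
    ∑ i : Fin 2 → ι, f (i ∘ ![0, 0, 1, 1]) = ∑ x, ∑ y, f ![x, x, y, y] := by
  simp only [sum_eq_sum_insertNth 0, Fin.insertNth_zero', univ_unique, sum_singleton]
  refine sum_congr rfl fun x _ ↦ sum_congr rfl fun y _ ↦ congrArg f <| funext fun t ↦ ?_
  fin_cases t <;> rfl

theorem sum_comp_double_three [Fintype ι] {M : Type*} [AddCommMonoid M] (f : (Fin 6 → ι) → M) :
    ∑ i : Fin 3 → ι, f (i ∘ ![0, 0, 1, 1, 2, 2]) = ∑ x, ∑ y, ∑ z, f ![x, x, y, y, z, z] := by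
  simp only [sum_eq_sum_insertNth 0, Fin.insertNth_zero', univ_unique, sum_singleton]
  refine sum_congr rfl fun x _ ↦ sum_congr rfl fun y _ ↦ sum_congr rfl fun z _ ↦
    congrArg f <| funext fun t ↦ ?_
  fin_cases t <;> rfl

end Tuples

theorem IsPairing.map_univ_castSucc_castSucc {ι : Type*} {N m : ℕ} {p : Fin (N + 2) → Fin (m + 1)}
    {q : Fin N → Fin m} (hp : IsPairing p) (hq : IsPairing q) {i : Fin (m + 1) → ι}
    (delta : i (p (Fin.last N).castSucc) = i (p (Fin.last (N + 1)))) :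
    (univ.val.map fun t : Fin N ↦ i (p t.castSucc.castSucc)) =
      univ.val.map ((i ∘ (p (Fin.last (N + 1))).succAbove) ∘ q) := by
  have legs := map_univ_eq_cons_cons (i ∘ p)
  rw [hp.map_univ_comp, map_univ_eq_cons i (p (Fin.last (N + 1)))] at legs
  simp only [Function.comp_apply, delta, two_nsmul, Multiset.cons_add, Multiset.add_cons,
    Multiset.cons_inj_right] at legs
  rw [hq.map_univ_comp, two_nsmul]
  exact legs.symm

section Tensors

variable {ι K : Type*}

/-- Full symmetry of a tensor with legs `X`, given by its components: invariance under all
permutations of the arguments. -/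
def IsFullySymmetric {X : Type*} (A : (X → ι) → K) : Prop :=
  ∀ (π : Equiv.Perm X) (μ : X → ι), A (μ ∘ π) = A μ

theorem IsFullySymmetric.apply_eq_of_map_univ_eq {X : Type*} [Fintype X] {A : (X → ι) → K}
    (hA : IsFullySymmetric A) {μ ν : X → ι} (h : univ.val.map μ = univ.val.map ν) :
    A μ = A ν := by
  obtain ⟨π, rfl⟩ := exists_perm_comp_eq_of_map_univ_eq h
  exact hA π ν

variable [DecidableEq ι] {N m : ℕ} {A : (Fin N → ι) → K} {p : Fin (N + 2) → Fin (m + 1)}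
  {q : Fin N → Fin m}

/-- The components of `A ⊗ I`, with the identity on the last two legs. -/
def tensorDelta [MulZeroOneClass K] (A : (Fin N → ι) → K) (μ : Fin (N + 2) → ι) : K :=
  A (fun t ↦ μ t.castSucc.castSucc) *
    if μ (Fin.last N).castSucc = μ (Fin.last (N + 1)) then 1 else 0

/-- The components of `Sym(A ⊗ I)`, the average of `A ⊗ I` over all permutations of its legs. -/
def symTensorDelta [Field K] (A : (Fin N → ι) → K) (μ : Fin (N + 2) → ι) : K :=
  1 / (Nat.factorial (N + 2) : K) * ∑ σ : Equiv.Perm (Fin (N + 2)), tensorDelta A (μ ∘ σ)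

theorem tensorDelta_comp [MulZeroOneClass K] (hA : IsFullySymmetric A) (hp : IsPairing p)
    (hq : IsPairing q) (i : Fin (m + 1) → ι) :
    tensorDelta A (i ∘ p) = A ((i ∘ (p (Fin.last (N + 1))).succAbove) ∘ q) *
      if i (p (Fin.last N).castSucc) = i (p (Fin.last (N + 1))) then 1 else 0 := by
  simp only [tensorDelta, Function.comp_apply]
  split_ifs with delta
  · rw [hA.apply_eq_of_map_univ_eq (hp.map_univ_castSucc_castSucc hq delta)]
  · rw [mul_zero, mul_zero]

theorem sum_tensorDelta_comp [Fintype ι] [CommSemiring K] (hA : IsFullySymmetric A)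
    (hp : IsPairing p) (hq : IsPairing q) :
    ∑ i : Fin (m + 1) → ι, tensorDelta A (i ∘ p) =
      (if p (Fin.last N).castSucc = p (Fin.last (N + 1)) then (Fintype.card ι : K) else 1) *
        ∑ j : Fin m → ι, A (j ∘ q) := by
  have insertNth_comp (c : Fin (m + 1)) (x : ι) (j : Fin m → ι) :
      (c.insertNth x j : Fin (m + 1) → ι) ∘ c.succAbove = j := by
    ext t
    simp
  rw [sum_eq_sum_insertNth (p (Fin.last (N + 1))), sum_comm, mul_sum]
  refine sum_congr rfl fun j _ ↦ ?_
  simp only [tensorDelta_comp hA hp hq, insertNth_comp, Fin.insertNth_apply_same, ← mul_sum]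
  rw [mul_comm]
  congr 1
  split_ifs with same_pair
  · simp [same_pair]
  · obtain ⟨d, hd⟩ := Fin.exists_succAbove_eq same_pair
    simp [← hd]

theorem contraction_sym_A_delta_general [Fintype ι] [Field K] [CharZero K]
    (hA : IsFullySymmetric A) (hp : IsPairing p) (hq : IsPairing q) :
    ∑ i : Fin (m + 1) → ι, symTensorDelta A (i ∘ p) =
      ((Fintype.card ι : K) + N) / (N + 1) * ∑ j : Fin m → ι, A (j ∘ q) := by
  have factorial_ne_zero : (Nat.factorial (N + 2) : K) ≠ 0 :=
    Nat.cast_ne_zero.mpr (Nat.factorial_ne_zero _)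
  have succ_ne_zero : (N + 1 : K) ≠ 0 := Nat.cast_add_one_ne_zero N
  have average := hp.sum_perm_ite (Fin.castSucc_lt_last (Fin.last N)).ne (Fintype.card ι : K)
  rw [Fintype.card_fin] at average
  push_cast at average
  simp only [symTensorDelta, ← mul_sum, Function.comp_assoc]
  rw [sum_comm]
  simp only [sum_tensorDelta_comp hA (hp.comp_perm _) hq, ← sum_mul, Function.comp_apply]
  rw [← mul_assoc]
  congr 1
  field_simp
  linear_combination average

end Tensors

theorem isPairing_double_two : IsPairing (![0, 0, 1, 1] : Fin 4 → Fin 2) := by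
  unfold IsPairing
  decide

theorem isPairing_double_three : IsPairing (![0, 0, 1, 1, 2, 2] : Fin 6 → Fin 3) := by
  unfold IsPairing
  decide

/-- **Contraction of the symmetrized product of a fully symmetric 4-tensor with the
identity.** With
`Sym(A⊗I)(μ₁,…,μ₆) = (1/6!) Σ_{σ ∈ S₆} A(μ_{σ(1)},…,μ_{σ(4)}) δ_{μ_{σ(5)}μ_{σ(6)}}`,
one has `Σ_{i,j,k} Sym(A⊗I)(i,i,j,j,k,k) = ((n+4)/5) Σ_{μ,ν} A(μ,μ,ν,ν)`. -/
theorem contraction_sym_A_delta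
    (n : ℕ) (hn : 1 ≤ n)
    (A : Fin n → Fin n → Fin n → Fin n → ℝ)
    (hA : ∀ (π : Equiv.Perm (Fin 4)) (μ : Fin 4 → Fin n),
      A (μ (π 0)) (μ (π 1)) (μ (π 2)) (μ (π 3)) = A (μ 0) (μ 1) (μ 2) (μ 3)) :
    (∑ i : Fin n, ∑ j : Fin n, ∑ k : Fin n,
        (1 / (Nat.factorial 6 : ℝ)) * ∑ σ : Equiv.Perm (Fin 6),
          A (![i, i, j, j, k, k] (σ 0)) (![i, i, j, j, k, k] (σ 1))
            (![i, i, j, j, k, k] (σ 2)) (![i, i, j, j, k, k] (σ 3))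
            * (if ![i, i, j, j, k, k] (σ 4) = ![i, i, j, j, k, k] (σ 5)
               then (1 : ℝ) else 0))
      = (((n : ℝ) + 4) / 5) * ∑ μ : Fin n, ∑ ν : Fin n, A μ μ ν ν := by
  let T : (Fin 4 → Fin n) → ℝ := fun μ ↦ A (μ 0) (μ 1) (μ 2) (μ 3)
  calc
    _ = ∑ i : Fin 3 → Fin n, symTensorDelta T (i ∘ ![0, 0, 1, 1, 2, 2]) :=
        (sum_comp_double_three (symTensorDelta T)).symm
    _ = ((n : ℝ) + 4) / 5 * ∑ j : Fin 2 → Fin n, T (j ∘ ![0, 0, 1, 1]) := by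
        rw [contraction_sym_A_delta_general (A := T) hA isPairing_double_three isPairing_double_two]
        norm_num
    _ = _ := congrArg _ (sum_comp_double_two T)
end
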